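/- Let k be an algebraically closed field of characteristic 0 or p > 2, m an odd positive integer not divisible by the characteristic of k, ζ ∈ k a primitive m-th root of unity, and n ≥ 2. Let u ∈ SO(2n,k) satisfy u^m = I, with m the least positive integer j such that u^j ∈ {I, −I} (so Int u has order m as an automorphism of SO(2n,k)). Set 𝔤(1) = {x ∈ so(2n,k) : u·x·u⁻¹ = ζ·x} and H = {h ∈ SO(2n,k) : h·u = u·h}. Let c be a Cartan subspace of 𝔤(1) and r = dim c. Then, with respect to a suitable basis of c, the little Weyl group of c with respect to H equals G(2m,1,r) if n > mr and there exists x ∈ O(2n,k) with det x = −1 such that x·u = u·x and x commutes with every element of c; otherwise it equals G(2m,2,r). -/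

import Mathlib

open Matrix

/-- The group `G(m,q,r)` of `r×r` monomial matrices whose nonzero entries are
`m`-th roots of unity and the product of whose nonzero entries is an
`(m/q)`-th root of unity, as a set of matrices. -/
def GmqrSet (k : Type*) [Field k] (m q r : ℕ) : Set (Matrix (Fin r) (Fin r) k) :=
  {w | ∃ σ : Equiv.Perm (Fin r),
    (∀ i j, i ≠ σ j → w i j = 0) ∧
    (∀ j, w (σ j) j ^ m = 1) ∧
    (∏ j, w (σ j) j) ^ (m / q) = 1}

/-- A matrix is semisimple if it is diagonalizable. -/
def IsSemisimpleMat {k : Type*} [Field k] {N : Type*} [Fintype N] [DecidableEq N]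
    (x : Matrix N N k) : Prop :=
  ∃ P : Matrix N N k, IsUnit P.det ∧ (P * x * P⁻¹).IsDiag

/-- `c` is a Cartan subspace of `g1`: a subspace of `g1`, consisting of
pairwise commuting diagonalizable matrices, and maximal among such. -/
def IsCartanSubspace {k : Type*} [Field k] {N : Type*} [Fintype N] [DecidableEq N]
    (g1 : Set (Matrix N N k)) (c : Submodule k (Matrix N N k)) : Prop :=
  (c : Set (Matrix N N k)) ⊆ g1 ∧
  (∀ x ∈ c, ∀ y ∈ c, x * y = y * x) ∧
  (∀ x ∈ c, IsSemisimpleMat x) ∧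
  ∀ c' : Submodule k (Matrix N N k),
    ((c' : Set (Matrix N N k)) ⊆ g1 ∧ (∀ x ∈ c', ∀ y ∈ c', x * y = y * x) ∧
      (∀ x ∈ c', IsSemisimpleMat x)) → c ≤ c' → c' = c

/-- The little Weyl group of `c` with respect to `H`, written with respect to
the family `b` (a basis of `c`): the set of matrices of the transformations
`x ↦ h·x·h⁻¹` of `c`, for `h ∈ H` normalizing `c`. -/
def littleWeylSet {k : Type*} [Field k] {N : Type*} [Fintype N] [DecidableEq N] {r : ℕ}
    (H : Set (Matrix N N k)) (c : Submodule k (Matrix N N k))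
    (b : Fin r → Matrix N N k) : Set (Matrix (Fin r) (Fin r) k) :=
  {w | ∃ h ∈ H, (∀ x ∈ c, h * x * h⁻¹ ∈ c) ∧ (∀ x ∈ c, h⁻¹ * x * h ∈ c) ∧
    ∀ j, h * b j * h⁻¹ = ∑ i, w i j • b i}

/-- The `N×N` matrix with `1` on the antidiagonal and `0` elsewhere. -/
def antidiagJ (k : Type*) [Field k] (N : ℕ) : Matrix (Fin N) (Fin N) k :=
  Matrix.of fun i j => if (i : ℕ) + (j : ℕ) = N - 1 then 1 else 0

set_option linter.unusedSectionVars false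

section helpers

variable {k : Type*} [Field k] {N : Type*} [Fintype N] [DecidableEq N]

theorem aux_toLin_ss {x : Matrix N N k} (h : IsSemisimpleMat x) :
    Module.End.IsSemisimple (Matrix.toLin' x) := by
  classical
  obtain ⟨P, hP, hD⟩ := h
  obtain ⟨d, hd⟩ : ∃ d, P * x * P⁻¹ = diagonal d := ⟨_, hD.diagonal_diag.symm⟩
  let p : Polynomial k := ∏ a ∈ Finset.univ.image d, (Polynomial.X - Polynomial.C a)
  have hp : Squarefree p := by
    apply Polynomial.Separable.squarefree
    apply Polynomial.separable_prod_X_sub_C_iff'.2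
    intro a _ b _ h
    exact h
  refine Module.End.isSemisimple_of_squarefree_aeval_eq_zero hp ?_
  have hx : x = P⁻¹ * diagonal d * P := by
    rw [← hd]
    simp only [Matrix.mul_assoc, Matrix.nonsing_inv_mul _ hP, Matrix.mul_one]
    rw [← Matrix.mul_assoc, Matrix.nonsing_inv_mul _ hP, Matrix.one_mul]
  have h1 : ∀ q : Polynomial k, Polynomial.aeval x q
      = P⁻¹ * diagonal (fun i => q.eval (d i)) * P := by
    intro q
    induction q using Polynomial.induction_on' with
    | add a b ha hb =>
      simp only [map_add, ha, hb, Polynomial.eval_add, ← Matrix.diagonal_add, Matrix.mul_add, Matrix.add_mul]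
    | monomial n a =>
      have h2 : x ^ n = P⁻¹ * diagonal (fun i => d i ^ n) * P := by
        induction n with
        | zero => simp [Matrix.nonsing_inv_mul _ hP]
        | succ n ih =>
          rw [pow_succ, ih]
          rw [hx]
          have : P⁻¹ * diagonal (fun i => d i ^ n) * P * (P⁻¹ * diagonal d * P)
            = P⁻¹ * (diagonal (fun i => d i ^ n) * (P * P⁻¹) * diagonal d) * P := by
            simp only [Matrix.mul_assoc]
          rw [this, Matrix.mul_nonsing_inv _ hP, Matrix.mul_one, Matrix.diagonal_mul_diagonal]
          simp only [pow_succ]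
      rw [Polynomial.aeval_monomial, h2]
      have : (fun i => Polynomial.eval (d i) (Polynomial.monomial n a)) = a • (fun i => d i ^ n) := by
        ext i; simp
      rw [this, Matrix.diagonal_smul, ← Algebra.smul_def]
      simp
  have h0 : Polynomial.aeval x p = 0 := by
    rw [h1]
    have : (fun i => p.eval (d i)) = 0 := by
      ext i
      simp only [p, Polynomial.eval_prod, Pi.zero_apply]
      exact Finset.prod_eq_zero (Finset.mem_image_of_mem d (Finset.mem_univ i)) (by simp)
    rw [this]
    simp
  have := Polynomial.aeval_algHom_apply (Matrix.toLinAlgEquiv' (R := k) (n := N)) x p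
  have e : (Matrix.toLinAlgEquiv' (R := k) (n := N)) x = Matrix.toLin' x := rfl
  rw [e] at this
  rw [this, h0, map_zero]

theorem aux_toLin_ss_span [IsAlgClosed k] {x : Matrix N N k} (h : Module.End.IsSemisimple (Matrix.toLin' x)) :
    IsSemisimpleMat x := by
  classical
  have htop : ⨆ μ, Module.End.eigenspace (Matrix.toLin' x) μ = ⊤ := by
    rw [← Module.End.iSup_maxGenEigenspace_eq_top (Matrix.toLin' x)]
    congr 1
    ext1 μ
    exact (h.isFinitelySemisimple.maxGenEigenspace_eq_eigenspace μ).symm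
  let s : Set (N → k) := {v | ∃ μ : k, x *ᵥ v = μ • v}
  have hs : Submodule.span k s = ⊤ := by
    rw [eq_top_iff, ← htop]
    refine iSup_le fun μ v hv => Submodule.subset_span ⟨μ, ?_⟩
    rw [Module.End.mem_eigenspace_iff] at hv
    simpa using hv
  obtain ⟨b, hbs, hspan, hli⟩ := exists_linearIndependent k s
  let B : Module.Basis b k (N → k) := Module.Basis.mk hli (by
    rw [Subtype.range_coe, hspan, hs])
  have : Fintype b := FiniteDimensional.fintypeBasisIndex B
  have e : b ≃ N := Fintype.equivOfCardEq (by
    rw [← Module.finrank_eq_card_basis B]; simp)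
  let B' := B.reindex e
  have hB' : ∀ i, ∃ μ : k, x *ᵥ (B' i) = μ • (B' i) := by
    intro i
    have : B' i = (e.symm i : N → k) := by simp [B', B]
    rw [this]
    exact hbs (e.symm i).2
  choose d hd using hB'
  let Q : Matrix N N k := (Pi.basisFun k N).toMatrix B'
  have hQ1 : Q * B'.toMatrix (Pi.basisFun k N) = 1 := Module.Basis.toMatrix_mul_toMatrix_flip _ _
  have hQdet : IsUnit Q.det := Matrix.isUnit_det_of_right_inverse hQ1
  have hxQ : x * Q = Q * diagonal d := by
    ext i j
    have := congrFun (hd j) i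
    simp only [Matrix.mul_diagonal]
    simp only [Q, Matrix.mul_apply, Module.Basis.toMatrix_apply, Pi.basisFun_repr]
    rw [mul_comm]
    exact this
  refine ⟨Q⁻¹, Matrix.isUnit_nonsing_inv_det _ hQdet, ?_⟩
  rw [Matrix.nonsing_inv_nonsing_inv _ hQdet, Matrix.mul_assoc, hxQ, ← Matrix.mul_assoc,
    Matrix.nonsing_inv_mul _ hQdet, Matrix.one_mul]
  exact Matrix.isDiag_diagonal d

theorem aux_weights [IsAlgClosed k] (c : Submodule k (Matrix N N k))
    (hcomm : ∀ x ∈ c, ∀ y ∈ c, x * y = y * x) (hss : ∀ x ∈ c, IsSemisimpleMat x)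
    (p : Submodule k (N → k))
    (hp : ∀ (χ : c → k) (v : N → k), (∀ x : c, x.1 *ᵥ v = χ x • v) → v ∈ p) : p = ⊤ := by
  have := Module.End.iSup_iInf_maxGenEigenspace_eq_top_of_iSup_maxGenEigenspace_eq_top_of_commute
    (fun x : c => Matrix.toLin' x.1) (by
      intro x y _
      change _ = _
      rw [Module.End.mul_eq_comp, Module.End.mul_eq_comp, ← Matrix.toLin'_mul, ← Matrix.toLin'_mul,
        hcomm x.1 x.2 y.1 y.2])
    (fun x => Module.End.iSup_maxGenEigenspace_eq_top _)
  rw [eq_top_iff, ← this]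
  refine iSup_le fun χ v hv => hp χ v fun x => ?_
  rw [Submodule.mem_iInf] at hv
  have h1 := hv x
  rw [(aux_toLin_ss (hss x.1 x.2)).isFinitelySemisimple.maxGenEigenspace_eq_eigenspace,
    Module.End.mem_eigenspace_iff] at h1
  simpa using h1

end helpers

section pm

variable {k : Type*} [Field k] {I : Type*} [Fintype I] [DecidableEq I]

/-- permutation matrix sending the basis vector `j` to the basis vector `τ j`. -/
def pmat (k : Type*) [Field k] {I : Type*} [DecidableEq I] (τ : Equiv.Perm I) : Matrix I I k :=
  Matrix.of fun i j => if i = τ j then 1 else 0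

theorem mul_pmat_apply {N : Type*} (E : Matrix N I k) (τ : Equiv.Perm I) (i : N) (j : I) :
    (E * pmat k τ) i j = E i (τ j) := by
  simp [pmat, Matrix.mul_apply]

theorem pmat_pos {τ : Equiv.Perm I} {i j : I} (h : i = τ j) : pmat k τ i j = 1 := if_pos h

theorem pmat_neg {τ : Equiv.Perm I} {i j : I} (h : i ≠ τ j) : pmat k τ i j = 0 := if_neg h

theorem pmat_mul (σ τ : Equiv.Perm I) : pmat k (σ * τ) = pmat k σ * pmat k τ := by
  ext i j
  rw [mul_pmat_apply]
  simp only [pmat, Matrix.of_apply, Equiv.Perm.mul_apply]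
  rfl

theorem pmat_one : pmat k (1 : Equiv.Perm I) = 1 := by
  ext i j
  simp only [pmat, Matrix.one_apply, Matrix.of_apply, Equiv.Perm.one_apply]
  rfl

theorem pmat_transpose (τ : Equiv.Perm I) : (pmat k τ)ᵀ = pmat k τ⁻¹ := by
  ext i j
  simp only [pmat, Matrix.transpose_apply, Matrix.of_apply, Equiv.Perm.eq_inv_iff_eq]
  simp only [eq_comm]

theorem pmat_det (τ : Equiv.Perm I) : (pmat k τ).det = ((Equiv.Perm.sign τ : ℤ) : k) := by
  have : pmat k τ = (Equiv.Perm.permMatrix k τ)ᵀ := by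
    ext i j
    simp [pmat, Equiv.Perm.permMatrix, PEquiv.toMatrix_apply, eq_comm]
  rw [this, Matrix.det_transpose, Matrix.det_permutation]

theorem pmat_mul_diag (τ : Equiv.Perm I) (d : I → k) :
    pmat k τ * diagonal (fun i => d (τ i)) = diagonal d * pmat k τ := by
  ext i j
  rw [mul_pmat_apply, Matrix.mul_diagonal]
  simp only [pmat, Matrix.of_apply, Matrix.diagonal_apply]
  split_ifs with h
  · rw [h]; simp
  · simp

theorem pmat_comm {σ τ : Equiv.Perm I} (h : σ * τ = τ * σ) :
    pmat k σ * pmat k τ = pmat k τ * pmat k σ := by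
  rw [← pmat_mul, h, pmat_mul]

end pm

section core

/-- shift of the second coordinate. -/
def shf (ι : Type*) {M : ℕ} (a : ZMod M) : Equiv.Perm (ι × ZMod M) where
  toFun p := (p.1, p.2 + a)
  invFun p := (p.1, p.2 - a)
  left_inv p := by simp
  right_inv p := by simp

theorem shf_apply {ι : Type*} {M : ℕ} (a : ZMod M) (p : ι × ZMod M) :
    shf ι a p = (p.1, p.2 + a) := rfl

theorem shf_mul {ι : Type*} {M : ℕ} (a b : ZMod M) :
    shf ι a * shf ι b = shf ι (b + a) := by
  ext p <;> simp [shf_apply, add_assoc]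

theorem shf_zero {ι : Type*} {M : ℕ} : shf ι (0 : ZMod M) = 1 := by
  ext p <;> simp [shf_apply]

theorem shf_comm {ι : Type*} {M : ℕ} (a b : ZMod M) :
    shf ι a * shf ι b = shf ι b * shf ι a := by
  rw [shf_mul, shf_mul, add_comm]

theorem two_m_zero (m : ℕ) : (m : ZMod (2 * m)) + m = 0 := by
  have : ((2 * m : ℕ) : ZMod (2 * m)) = 0 := ZMod.natCast_self _
  rw [← this]; push_cast; ring

variable {k : Type*} [Field k] {N : Type*} [Fintype N] [DecidableEq N]

/-- Basic data. -/
structure Dat (m : ℕ) (ζ : k) (ψ : ZMod (2 * m) → k) (J u : Matrix N N k) : Prop where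
  Jt : Jᵀ = J
  JJ : J * J = 1
  uJ : uᵀ * J * u = J
  um : u ^ m = 1
  two : (2 : k) ≠ 0
  modd : Odd m
  add : ∀ s t, ψ (s + t) = ψ s * ψ t
  zero : ψ 0 = 1
  pm : ψ m = -1
  pu : ψ (m + 1) * ζ = 1
  inj : ∀ t, ψ t = 1 → t = 0

/-- diagonal matrices -/
def dm {m : ℕ} (ψ : ZMod (2 * m) → k) {s : ℕ} (a : Fin s → k) :
    Matrix (Fin s × ZMod (2 * m)) (Fin s × ZMod (2 * m)) k :=
  Matrix.diagonal fun p => a p.1 * ψ p.2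

/-- adapted families of vectors. -/
structure Fam {m : ℕ} (ψ : ZMod (2 * m) → k) (J u : Matrix N N k)
    (c : Submodule k (Matrix N N k)) [NeZero m]
    {s : ℕ} (E : Matrix N (Fin s × ZMod (2 * m)) k) : Prop where
  F1 : Eᵀ * J * E = pmat k (shf (Fin s) (m : ZMod (2 * m)))
  F2 : u * E = E * pmat k (shf (Fin s) ((m : ZMod (2 * m)) + 1))
  F3 : ∀ x ∈ c, ∃ a : Fin s → k, x * E = E * dm ψ a

/-- dual family. -/
def Est {m : ℕ} [NeZero m] (J : Matrix N N k) {s : ℕ} (E : Matrix N (Fin s × ZMod (2 * m)) k) :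
    Matrix (Fin s × ZMod (2 * m)) N k :=
  pmat k (shf (Fin s) (m : ZMod (2 * m))) * Eᵀ * J

variable {m : ℕ} [NeZero m] {ζ : k} {ψ : ZMod (2 * m) → k} {J u : Matrix N N k}
  {c : Submodule k (Matrix N N k)} {s : ℕ} {E : Matrix N (Fin s × ZMod (2 * m)) k}

theorem SS : pmat k (shf (Fin s) (m : ZMod (2 * m))) * pmat k (shf (Fin s) (m : ZMod (2 * m))) = 1 := by
  rw [← pmat_mul, shf_mul, two_m_zero, shf_zero, pmat_one]

theorem St : (pmat k (shf (Fin s) (m : ZMod (2 * m))))ᵀ = pmat k (shf (Fin s) (m : ZMod (2 * m))) := by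
  rw [pmat_transpose]
  congr 1
  rw [inv_eq_iff_mul_eq_one, shf_mul, two_m_zero, shf_zero]

theorem Est_mul (F : Fam ψ J u c E) : Est J E * E = 1 := by
  rw [Est, Matrix.mul_assoc, Matrix.mul_assoc, ← Matrix.mul_assoc Eᵀ, F.F1, SS]

theorem EE_mul (F : Fam ψ J u c E) (A B : Matrix (Fin s × ZMod (2 * m)) (Fin s × ZMod (2 * m)) k) :
    (E * A * Est J E) * (E * B * Est J E) = E * (A * B) * Est J E := by
  have : (E * A * Est J E) * (E * B * Est J E) = E * A * (Est J E * E) * B * Est J E := by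
    simp only [Matrix.mul_assoc]
  rw [this, Est_mul F, Matrix.mul_one, Matrix.mul_assoc E]

theorem Et_u (D : Dat m ζ ψ J u) (F : Fam ψ J u c E) :
    pmat k (shf (Fin s) ((m : ZMod (2 * m)) + 1)) * (Eᵀ * J) = Eᵀ * J * u := by
  set U := pmat k (shf (Fin s) ((m : ZMod (2 * m)) + 1)) with hU
  have hUU : U * Uᵀ = 1 := by
    rw [hU, pmat_transpose, ← pmat_mul, mul_inv_cancel, pmat_one]
  have h1 : Eᵀ * J = Uᵀ * Eᵀ * J * u := by
    nth_rw 1 [← D.uJ]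
    rw [← Matrix.transpose_mul, ← F.F2, Matrix.transpose_mul]
    simp only [Matrix.mul_assoc]
  rw [h1]
  have : U * (Uᵀ * Eᵀ * J * u) = (U * Uᵀ) * (Eᵀ * J * u) := by simp only [Matrix.mul_assoc]
  rw [this, hUU, Matrix.one_mul, ← h1]

theorem Est_u (D : Dat m ζ ψ J u) (F : Fam ψ J u c E) :
    Est J E * u = pmat k (shf (Fin s) ((m : ZMod (2 * m)) + 1)) * Est J E := by
  rw [Est, Matrix.mul_assoc, Matrix.mul_assoc, ← Matrix.mul_assoc Eᵀ, ← Et_u D F, ← Matrix.mul_assoc,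
    pmat_comm (shf_comm _ _)]
  simp only [Matrix.mul_assoc]

theorem S_diag (D : Dat m ζ ψ J u) (a : Fin s → k) :
    pmat k (shf (Fin s) (m : ZMod (2 * m))) * dm ψ a
    = - (dm ψ a * pmat k (shf (Fin s) (m : ZMod (2 * m)))) := by
  rw [dm, ← pmat_mul_diag, ← Matrix.mul_neg]
  congr 1
  rw [Matrix.diagonal_neg]
  congr 1
  ext p
  simp [shf_apply, D.add, D.pm]

theorem U_diag (D : Dat m ζ ψ J u) (a : Fin s → k) :
    pmat k (shf (Fin s) ((m : ZMod (2 * m)) + 1)) * dm ψ a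
    = ζ • (dm ψ a * pmat k (shf (Fin s) ((m : ZMod (2 * m)) + 1))) := by
  rw [dm, ← pmat_mul_diag, ← Matrix.mul_smul]
  congr 1
  rw [← Matrix.diagonal_smul]
  congr 1
  ext p
  simp only [shf_apply, D.add _ ((m : ZMod (2 * m)) + 1), Pi.smul_apply, smul_eq_mul]
  linear_combination (- a p.1 * ψ p.2) * D.pu

theorem dm_comm (a b : Fin s → k) : dm ψ a * dm ψ b = dm ψ b * dm ψ a := by
  rw [dm, dm, Matrix.diagonal_mul_diagonal, Matrix.diagonal_mul_diagonal]
  congr 1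
  ext p
  ring

theorem dm_transpose (a : Fin s → k) : (dm ψ a)ᵀ = dm ψ a := by
  rw [dm, Matrix.diagonal_transpose]

theorem Est_x (D : Dat m ζ ψ J u) {x : Matrix N N k} (hx : xᵀ * J + J * x = 0) (a : Fin s → k)
    (h : x * E = E * dm ψ a) :
    Est J E * x = dm ψ a * Est J E := by
  have h1 : J * x = - (xᵀ * J) := by
    rw [eq_neg_iff_add_eq_zero, add_comm]; exact hx
  rw [Est, Matrix.mul_assoc, h1, Matrix.mul_neg, Matrix.mul_assoc, ← Matrix.mul_assoc Eᵀ,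
    ← Matrix.transpose_mul, h, Matrix.transpose_mul, dm_transpose,
    Matrix.mul_assoc, ← Matrix.mul_assoc, S_diag D, Matrix.neg_mul, neg_neg]
  simp only [Matrix.mul_assoc]

theorem psi_nat (D : Dat m ζ ψ J u) (t : ZMod (2 * m)) (n : ℕ) : ψ t ^ n = ψ (n * t) := by
  induction n with
  | zero => simp [D.zero]
  | succ n ih => rw [pow_succ, ih, ← D.add]; congr 1; push_cast; ring

theorem psi_pow (D : Dat m ζ ψ J u) (t : ZMod (2 * m)) : ψ t ^ (2 * m) = 1 := by
  rw [psi_nat D, ZMod.natCast_self, zero_mul, D.zero]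

theorem psi_ne (D : Dat m ζ ψ J u) (t : ZMod (2 * m)) : ψ t ≠ 0 := by
  intro h
  have := psi_pow D t
  rw [h, zero_pow (by have := NeZero.ne m; omega)] at this
  exact zero_ne_one this

/-- the basis element -/
def bb (ψ : ZMod (2 * m) → k) (J : Matrix N N k) (E : Matrix N (Fin s × ZMod (2 * m)) k)
    (j : Fin s) : Matrix N N k := E * dm ψ (Pi.single j 1) * Est J E

theorem bb_pow (D : Dat m ζ ψ J u) (F : Fam ψ J u c E) (j : Fin s) :
    bb ψ J E j ^ (2 * m + 1) = bb ψ J E j := by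
  have h : ∀ n : ℕ, bb ψ J E j ^ (n + 1) = E * (dm ψ (Pi.single j 1) ^ (n + 1)) * Est J E := by
    intro n
    induction n with
    | zero => simp [bb]
    | succ n ih =>
      rw [pow_succ, ih, bb, EE_mul F, pow_succ _ (n + 1)]
  rw [h, bb]
  congr 2
  rw [dm, Matrix.diagonal_pow]
  congr 1
  ext p
  simp only [Pi.pow_apply, Pi.single_apply]
  split_ifs
  · rw [one_mul, pow_succ, psi_pow D, one_mul]
  · simp

theorem bb_mul (F : Fam ψ J u c E) {i j : Fin s} (h : i ≠ j) :
    bb ψ J E i * bb ψ J E j = 0 := by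
  rw [bb, bb, EE_mul F, dm, dm, Matrix.diagonal_mul_diagonal]
  have : (fun p : Fin s × ZMod (2 * m) => (Pi.single i 1 : Fin s → k) p.1 * ψ p.2
      * ((Pi.single j 1 : Fin s → k) p.1 * ψ p.2)) = 0 := by
    ext p
    simp only [Pi.single_apply, Pi.zero_apply]
    split_ifs with h1 h2
    · exact absurd (h1.symm.trans h2) h
    all_goals simp
  rw [this]; simp

theorem sum_bb (w : Fin s → k) : ∑ i, w i • bb ψ J E i = E * dm ψ w * Est J E := by
  have : dm ψ w = ∑ i, w i • dm ψ (Pi.single i 1) := by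
    ext p q
    rw [Matrix.sum_apply]
    simp only [Matrix.smul_apply, dm, Matrix.diagonal_apply]
    split_ifs with h
    · simp [Pi.single_apply]
    · simp
  rw [this]
  simp only [bb, Matrix.mul_sum, Matrix.sum_mul, Matrix.mul_smul, Matrix.smul_mul]

theorem EE_sand (F : Fam ψ J u c E) (A : Matrix (Fin s × ZMod (2 * m)) (Fin s × ZMod (2 * m)) k) :
    Est J E * (E * A * Est J E) * E = A := by
  have : Est J E * (E * A * Est J E) * E = (Est J E * E) * A * (Est J E * E) := by
    simp only [Matrix.mul_assoc]
  rw [this, Est_mul F, Matrix.mul_one, Matrix.one_mul]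

theorem EE_inj (F : Fam ψ J u c E) {A B : Matrix (Fin s × ZMod (2 * m)) (Fin s × ZMod (2 * m)) k}
    (h : E * A * Est J E = E * B * Est J E) : A = B := by
  rw [← EE_sand F A, h, EE_sand F]

theorem sum_bb_inj (D : Dat m ζ ψ J u) (F : Fam ψ J u c E) {v w : Fin s → k}
    (h : ∑ i, v i • bb ψ J E i = ∑ i, w i • bb ψ J E i) : v = w := by
  rw [sum_bb, sum_bb] at h
  have := Matrix.diagonal_injective (EE_inj F h)
  ext i
  have := congrFun this (i, 0)
  simpa [D.zero] using this

theorem bb_li (D : Dat m ζ ψ J u) (F : Fam ψ J u c E) : LinearIndependent k (bb ψ J E) := by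
  rw [Fintype.linearIndependent_iff]
  intro g hg i
  have : g = fun _ => 0 := sum_bb_inj D F (by rw [hg]; simp)
  rw [this]

theorem u_det (D : Dat m ζ ψ J u) : IsUnit u.det := by
  have : u ^ m = 1 := D.um
  have h := congrArg Matrix.det this
  rw [Matrix.det_pow, Matrix.det_one] at h
  exact IsUnit.of_pow_eq_one h (NeZero.ne m)

theorem u_EE (F : Fam ψ J u c E) (A : Matrix (Fin s × ZMod (2 * m)) (Fin s × ZMod (2 * m)) k) :
    u * (E * A * Est J E) = E * (pmat k (shf (Fin s) ((m : ZMod (2 * m)) + 1)) * A) * Est J E := by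
  rw [← Matrix.mul_assoc, ← Matrix.mul_assoc, F.F2]
  simp only [Matrix.mul_assoc]

theorem EE_u (D : Dat m ζ ψ J u) (F : Fam ψ J u c E)
    (A : Matrix (Fin s × ZMod (2 * m)) (Fin s × ZMod (2 * m)) k) :
    (E * A * Est J E) * u = E * (A * pmat k (shf (Fin s) ((m : ZMod (2 * m)) + 1))) * Est J E := by
  rw [Matrix.mul_assoc, Est_u D F]
  simp only [Matrix.mul_assoc]

theorem bb_g1 (D : Dat m ζ ψ J u) (F : Fam ψ J u c E) (j : Fin s) :
    (bb ψ J E j)ᵀ * J + J * bb ψ J E j = 0 ∧ u * bb ψ J E j * u⁻¹ = ζ • bb ψ J E j := by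
  constructor
  · have h1 : (bb ψ J E j)ᵀ * J = J * (E * (pmat k (shf (Fin s) (m : ZMod (2 * m)))
        * dm ψ (Pi.single j 1)) * Eᵀ * J) := by
      simp only [bb, Est, Matrix.transpose_mul, dm_transpose, Matrix.transpose_transpose,
        D.Jt, St, Matrix.mul_assoc]
    rw [h1, S_diag D]
    simp only [bb, Est, Matrix.mul_assoc, Matrix.mul_neg, Matrix.neg_mul]
    simp
  · have h2 : u * bb ψ J E j = ζ • (bb ψ J E j * u) := by
      rw [bb, u_EE F, EE_u D F, U_diag D]
      simp only [Matrix.mul_smul, Matrix.smul_mul]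
    rw [h2, Matrix.smul_mul, Matrix.mul_assoc, Matrix.mul_nonsing_inv _ (u_det D), Matrix.mul_one]

theorem bb_comm (D : Dat m ζ ψ J u) (F : Fam ψ J u c E) (j : Fin s) {x : Matrix N N k} (hxc : x ∈ c)
    (hx : xᵀ * J + J * x = 0) : x * bb ψ J E j = bb ψ J E j * x := by
  obtain ⟨a, ha⟩ := F.F3 x hxc
  have e1 : x * bb ψ J E j = E * (dm ψ a * dm ψ (Pi.single j 1)) * Est J E := by
    rw [bb, ← Matrix.mul_assoc, ← Matrix.mul_assoc, ha]
    simp only [Matrix.mul_assoc]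
  have e2 : bb ψ J E j * x = E * (dm ψ (Pi.single j 1) * dm ψ a) * Est J E := by
    rw [bb, Matrix.mul_assoc, Est_x D hx a ha]
    simp only [Matrix.mul_assoc]
  rw [e1, e2, dm_comm]

theorem bb_ss [IsAlgClosed k] (hm : (2 * m : k) ≠ 0) (D : Dat m ζ ψ J u) (F : Fam ψ J u c E)
    (j : Fin s) : Module.End.IsSemisimple (Matrix.toLin' (bb ψ J E j)) := by
  have hp : Squarefree (Polynomial.X ^ (2 * m) * Polynomial.X - Polynomial.X : Polynomial k) := by
    apply Polynomial.Separable.squarefree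
    have : (Polynomial.X ^ (2 * m) * Polynomial.X - Polynomial.X : Polynomial k)
      = (Polynomial.X ^ (2 * m) - Polynomial.C 1) * Polynomial.X := by
      simp [sub_mul]
    rw [this]
    apply Polynomial.Separable.mul
    · apply Polynomial.separable_X_pow_sub_C
      · exact_mod_cast hm
      · exact one_ne_zero
    · exact Polynomial.separable_X
    · refine ⟨-1, Polynomial.X ^ (2 * m - 1), ?_⟩
      have h1 : 2 * m = (2 * m - 1) + 1 := by have := NeZero.ne m; omega
      have h2 : (Polynomial.X ^ (2 * m) : Polynomial k)
        = Polynomial.X ^ (2 * m - 1) * Polynomial.X := by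
        rw [← pow_succ, ← h1]
      rw [← h2]
      simp
  refine Module.End.isSemisimple_of_squarefree_aeval_eq_zero hp ?_
  have e : Matrix.toLin' (bb ψ J E j) ^ (2 * m + 1) = Matrix.toLin' (bb ψ J E j) := by
    rw [← Matrix.toLin'_pow, bb_pow D F]
  simp only [map_sub, map_mul, map_pow, Polynomial.aeval_X]
  rw [← pow_succ, e, sub_self]

theorem bb_mem [IsAlgClosed k] (hm : (2 * m : k) ≠ 0) (D : Dat m ζ ψ J u) (F : Fam ψ J u c E)
    (hc : IsCartanSubspace {x | xᵀ * J + J * x = 0 ∧ u * x * u⁻¹ = ζ • x} c)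
    (j : Fin s) : bb ψ J E j ∈ c := by
  obtain ⟨hg, hcomm, hss, hmax⟩ := hc
  have key := hmax (c ⊔ Submodule.span k {bb ψ J E j}) ⟨?_, ?_, ?_⟩ le_sup_left
  · rw [← key]
    exact Submodule.mem_sup_right (Submodule.mem_span_singleton_self _)
  · intro x hx
    obtain ⟨y, hy, z, hz, rfl⟩ := Submodule.mem_sup.1 hx
    obtain ⟨a, rfl⟩ := Submodule.mem_span_singleton.1 hz
    obtain ⟨h1, h2⟩ := hg hy
    obtain ⟨h3, h4⟩ := bb_g1 D F j
    constructor
    · have : (y + a • bb ψ J E j)ᵀ * J + J * (y + a • bb ψ J E j)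
        = (yᵀ * J + J * y) + a • ((bb ψ J E j)ᵀ * J + J * bb ψ J E j) := by
        simp only [Matrix.transpose_add, Matrix.transpose_smul, Matrix.add_mul, Matrix.mul_add,
          Matrix.smul_mul, Matrix.mul_smul, smul_add]
        abel
      rw [this, h1, h3]; simp
    · rw [Matrix.mul_add, Matrix.add_mul, h2, Matrix.mul_smul, Matrix.smul_mul, h4, smul_add,
        smul_comm]
  · intro x hx x' hx'
    obtain ⟨y, hy, z, hz, rfl⟩ := Submodule.mem_sup.1 hx
    obtain ⟨a, rfl⟩ := Submodule.mem_span_singleton.1 hz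
    obtain ⟨y', hy', z', hz', rfl⟩ := Submodule.mem_sup.1 hx'
    obtain ⟨a', rfl⟩ := Submodule.mem_span_singleton.1 hz'
    have e1 := bb_comm D F j hy (hg hy).1
    have e2 := bb_comm D F j hy' (hg hy').1
    simp only [Matrix.mul_add, Matrix.add_mul, Matrix.mul_smul, Matrix.smul_mul, e1, e2,
      hcomm y hy y' hy', smul_add, smul_smul, mul_comm a a']
    abel
  · intro x hx
    obtain ⟨y, hy, z, hz, rfl⟩ := Submodule.mem_sup.1 hx
    obtain ⟨a, rfl⟩ := Submodule.mem_span_singleton.1 hz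
    apply aux_toLin_ss_span
    rw [map_add, map_smul]
    refine Module.End.IsSemisimple.add_of_commute ?_ (aux_toLin_ss (hss y hy))
      (Module.End.IsSemisimple_smul _ (bb_ss hm D F j))
    apply Commute.smul_right
    change _ = _
    rw [Module.End.mul_eq_comp, Module.End.mul_eq_comp, ← Matrix.toLin'_mul, ← Matrix.toLin'_mul,
      bb_comm D F j hy (hg hy).1]

end core

section extend

variable {k : Type*} [Field k] {N : Type*} [Fintype N] [DecidableEq N]

/-- the bilinear form -/
def bt (J : Matrix N N k) (v w : N → k) : k := v ⬝ᵥ (J *ᵥ w)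

variable {m : ℕ} [NeZero m] {ζ : k} {ψ : ZMod (2 * m) → k} {J u : Matrix N N k}
  {c : Submodule k (Matrix N N k)} {s : ℕ} {E : Matrix N (Fin s × ZMod (2 * m)) k}

theorem bt_mul (A B : Matrix N N k) (v w : N → k) :
    bt J (A *ᵥ v) (B *ᵥ w) = bt (Aᵀ * J * B) v w := by
  simp only [bt]
  rw [← Matrix.mulVec_mulVec, ← Matrix.mulVec_mulVec, Matrix.dotProduct_mulVec v Aᵀ,
    Matrix.vecMul_transpose]

theorem bt_symm (hJ : Jᵀ = J) (v w : N → k) : bt J v w = bt J w v := by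
  rw [bt, bt, Matrix.dotProduct_mulVec, dotProduct_comm, ← Matrix.mulVec_transpose, hJ]

theorem bt_smul (a b : k) (v w : N → k) : bt J (a • v) (b • w) = a * b * bt J v w := by
  simp only [bt, Matrix.mulVec_smul, smul_dotProduct, dotProduct_smul, smul_eq_mul]
  ring

theorem bt_x {x : Matrix N N k} (hx : xᵀ * J + J * x = 0) (v w : N → k) :
    bt J (x *ᵥ v) w = - bt J v (x *ᵥ w) := by
  have h1 := bt_mul (J := J) x 1 v w
  have h2 := bt_mul (J := J) 1 x v w
  rw [Matrix.one_mulVec, Matrix.mul_one] at h1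
  rw [Matrix.one_mulVec, Matrix.transpose_one, Matrix.one_mul] at h2
  rw [h1, h2, eq_neg_iff_add_eq_zero]
  simp only [bt]
  rw [← dotProduct_add, ← Matrix.add_mulVec, hx]
  simp

theorem bt_u (D : Dat m ζ ψ J u) (n : ℕ) (v w : N → k) :
    bt J ((u ^ n) *ᵥ v) ((u ^ n) *ᵥ w) = bt J v w := by
  induction n with
  | zero => simp
  | succ n ih =>
    rw [pow_succ', ← Matrix.mulVec_mulVec, ← Matrix.mulVec_mulVec, bt_mul, D.uJ, ih]

theorem bt_E (D : Dat m ζ ψ J u) {e : N → k} (he : (Eᵀ * J) *ᵥ e = 0) (z : Fin s × ZMod (2 * m) → k) :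
    bt J e (E *ᵥ z) = 0 := by
  rw [bt_symm D.Jt, bt]
  rw [dotProduct_comm, Matrix.dotProduct_mulVec, ← Matrix.mulVec_transpose, Matrix.mulVec_mulVec, he]
  simp

theorem exists_ef [IsAlgClosed k] (D : Dat m ζ ψ J u) (F : Fam ψ J u c E)
    (hg : ∀ x ∈ c, xᵀ * J + J * x = 0)
    (hcomm : ∀ x ∈ c, ∀ y ∈ c, x * y = y * x) (hss : ∀ x ∈ c, IsSemisimpleMat x)
    (hs : s < Module.finrank k c) :
    ∃ (χ : c → k) (e f : N → k), (∀ x : c, x.1 *ᵥ e = χ x • e) ∧ (∀ x : c, x.1 *ᵥ f = (-χ x) • f) ∧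
      (Eᵀ * J) *ᵥ e = 0 ∧ (Eᵀ * J) *ᵥ f = 0 ∧ bt J e f = 1 ∧ ∃ x, χ x ≠ 0 := by
  set P : Matrix N N k := 1 - E * Est J E with hP
  have hxP : ∀ x ∈ c, x * P = P * x := by
    intro x hx
    obtain ⟨a, ha⟩ := F.F3 x hx
    rw [hP, Matrix.mul_sub, Matrix.sub_mul, Matrix.mul_one, Matrix.one_mul, ← Matrix.mul_assoc, ha,
      Matrix.mul_assoc E (Est J E), Est_x D (hg x hx) a ha, Matrix.mul_assoc]
  have hEP : Eᵀ * J * P = 0 := by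
    have h1 : Est J E * P = 0 := by
      rw [hP, Matrix.mul_sub, ← Matrix.mul_assoc, Est_mul F, Matrix.mul_one, Matrix.one_mul, sub_self]
    have h2 : Eᵀ * J = pmat k (shf (Fin s) (m : ZMod (2 * m))) * Est J E := by
      rw [Est, ← Matrix.mul_assoc, ← Matrix.mul_assoc, SS, Matrix.one_mul]
    rw [h2, Matrix.mul_assoc, h1, Matrix.mul_zero]
  obtain ⟨x0, hx0, hx0P⟩ : ∃ x ∈ c, x * P ≠ 0 := by
    by_contra hcon
    push Not at hcon
    have : c ≤ Submodule.span k (Set.range (bb ψ J E)) := by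
      intro x hx
      obtain ⟨a, ha⟩ := F.F3 x hx
      have h1 := hcon x hx
      rw [hP, Matrix.mul_sub, Matrix.mul_one, sub_eq_zero, ← Matrix.mul_assoc, ha, ← sum_bb] at h1
      rw [h1]
      exact Submodule.sum_mem _ fun i _ => Submodule.smul_mem _ _ (Submodule.subset_span ⟨i, rfl⟩)
    have h1 := Submodule.finrank_mono this
    have h2 := finrank_range_le_card (R := k) (bb ψ J E)
    rw [Fintype.card_fin] at h2
    have h3 : Module.finrank k (Submodule.span k (Set.range (bb ψ J E))) ≤ s := h2
    omega
  obtain ⟨χ, v, hv, hv0⟩ : ∃ (χ : c → k) (v : N → k), (∀ x : c, x.1 *ᵥ v = χ x • v) ∧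
      (x0 * P) *ᵥ v ≠ 0 := by
    by_contra hcon
    push Not at hcon
    have := aux_weights c hcomm hss (LinearMap.ker (Matrix.toLin' (x0 * P))) (by
      intro χ v hv
      rw [LinearMap.mem_ker, Matrix.toLin'_apply]
      exact hcon χ v hv)
    rw [LinearMap.ker_eq_top] at this
    exact hx0P (Matrix.toLin'.injective (by rw [this, map_zero]))
  have key : ∀ (χ : c → k) (v : N → k), (∀ x : c, x.1 *ᵥ v = χ x • v) →
      ∀ x : c, x.1 *ᵥ (P *ᵥ v) = χ x • (P *ᵥ v) := by
    intro χ v hv x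
    rw [Matrix.mulVec_mulVec, hxP _ x.2, ← Matrix.mulVec_mulVec, hv, Matrix.mulVec_smul]
  have he := key χ v hv
  have hχ0 : χ ⟨x0, hx0⟩ ≠ 0 := by
    intro h
    apply hv0
    rw [← Matrix.mulVec_mulVec]
    have := he ⟨x0, hx0⟩
    rw [h, zero_smul] at this
    exact this
  have hEe : ∀ v : N → k, (Eᵀ * J) *ᵥ (P *ᵥ v) = 0 := by
    intro v
    rw [Matrix.mulVec_mulVec, hEP, Matrix.zero_mulVec]
  set e := P *ᵥ v with hedef
  have hene : e ≠ 0 := by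
    intro h
    apply hv0
    rw [← Matrix.mulVec_mulVec, ← hedef, h, Matrix.mulVec_zero]
  obtain ⟨χ', w, hw, hw0⟩ : ∃ (χ' : c → k) (w : N → k), (∀ x : c, x.1 *ᵥ w = χ' x • w) ∧
      bt J e w ≠ 0 := by
    by_contra hcon
    push Not at hcon
    have := aux_weights c hcomm hss (LinearMap.ker (dotProductBilin k k (e ᵥ* J))) (by
      intro χ v hv
      rw [LinearMap.mem_ker]
      have := hcon χ v hv
      rw [bt, Matrix.dotProduct_mulVec] at this
      exact this)
    rw [LinearMap.ker_eq_top] at this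
    have h1 : e ᵥ* J = 0 := by
      apply dotProduct_eq_zero
      intro w
      exact LinearMap.congr_fun this w
    apply hene
    rw [← Matrix.vecMul_one e, ← D.JJ, ← Matrix.vecMul_vecMul, h1, Matrix.zero_vecMul]
  have hχ' : ∀ x, χ' x = - χ x := by
    intro x
    have h1 := bt_x (hg x.1 x.2) e w
    rw [he, hw] at h1
    have h2 := bt_smul (J := J) (χ x) 1 e w
    have h3 := bt_smul (J := J) 1 (χ' x) e w
    rw [one_smul] at h2 h3
    rw [h2, h3] at h1
    have : (χ' x + χ x) * bt J e w = 0 := by linear_combination h1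
    rcases mul_eq_zero.1 this with h | h
    · exact eq_neg_of_add_eq_zero_left h
    · exact absurd h hw0
  have hb : bt J e (P *ᵥ w) = bt J e w := by
    have : bt J e (P *ᵥ w) = bt J e w - bt J e (E *ᵥ (Est J E *ᵥ w)) := by
      rw [hP, Matrix.sub_mulVec, Matrix.one_mulVec, Matrix.mulVec_mulVec]
      simp only [bt, Matrix.mulVec_sub, dotProduct_sub]
    rw [this, bt_E D (hEe v), sub_zero]
  refine ⟨χ, e, (bt J e w)⁻¹ • (P *ᵥ w), he, ?_, hEe v, ?_, ?_, _, hχ0⟩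
  · intro x
    rw [Matrix.mulVec_smul, key χ' w hw, hχ', smul_comm]
  · rw [Matrix.mulVec_smul, hEe, smul_zero]
  · have := bt_smul (J := J) 1 (bt J e w)⁻¹ e (P *ᵥ w)
    rw [one_smul] at this
    rw [this, hb, one_mul, inv_mul_cancel₀ hw0]

/-- the new chain of vectors -/
def gv (u : Matrix N N k) (e f : N → k) (n : ℕ) : N → k :=
  (u ^ n) *ᵥ (if Even n then e else f)

theorem psi_one (D : Dat m ζ ψ J u) (n : ℕ) : ψ (n : ZMod (2 * m)) = ψ 1 ^ n := by
  rw [psi_nat D, mul_one]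

theorem gv_periodic (D : Dat m ζ ψ J u) (e f : N → k) : Function.Periodic (gv u e f) (2 * m) := by
  intro n
  have h : Even (n + 2 * m) ↔ Even n := by simp [Nat.even_add]
  simp only [gv, h]
  rw [pow_add, mul_comm 2 m, pow_mul, D.um, one_pow, mul_one]

theorem gv_val (D : Dat m ζ ψ J u) (e f : N → k) (t : ZMod (2 * m)) (n : ℕ) :
    gv u e f (t + (n : ZMod (2 * m))).val = gv u e f (t.val + n) := by
  have : t + (n : ZMod (2 * m)) = ((t.val + n : ℕ) : ZMod (2 * m)) := by
    push_cast
    rw [ZMod.natCast_zmod_val]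
  rw [this, ZMod.val_natCast, (gv_periodic D e f).map_mod_nat]

theorem gv_u (D : Dat m ζ ψ J u) (e f : N → k) (n : ℕ) :
    u *ᵥ gv u e f n = gv u e f (n + (m + 1)) := by
  have h : Even (n + (m + 1)) ↔ Even n := by
    have := D.modd
    rw [Nat.even_add]
    simp [this.add_one]
  simp only [gv, h]
  rw [Matrix.mulVec_mulVec, ← pow_succ', add_comm m 1, ← add_assoc, pow_add _ _ m, D.um, mul_one]

theorem x_u (D : Dat m ζ ψ J u) {x : Matrix N N k} (hx : u * x * u⁻¹ = ζ • x) (n : ℕ) :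
    x * u ^ n = (-ψ 1) ^ n • (u ^ n * x) := by
  have h1 : u * x = ζ • (x * u) := by
    rw [← Matrix.smul_mul, ← hx, Matrix.mul_assoc (u * x), Matrix.nonsing_inv_mul _ (u_det D),
      Matrix.mul_one]
  have h2 : x * u = (-ψ 1) • (u * x) := by
    rw [h1, smul_smul]
    have : -ψ 1 * ζ = 1 := by
      have := D.pu
      rw [D.add, D.pm] at this
      linear_combination this
    rw [this, one_smul]
  induction n with
  | zero => simp
  | succ n ih =>
    rw [pow_succ, ← Matrix.mul_assoc, ih, Matrix.smul_mul, Matrix.mul_assoc, h2, Matrix.mul_smul,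
      smul_smul, Matrix.mul_assoc, pow_succ]

theorem x_gv (D : Dat m ζ ψ J u) {x : Matrix N N k} (hx : u * x * u⁻¹ = ζ • x) {e f : N → k} {a : k}
    (he : x *ᵥ e = a • e) (hf : x *ᵥ f = (-a) • f) (n : ℕ) :
    x *ᵥ gv u e f n = (a * ψ 1 ^ n) • gv u e f n := by
  rw [gv, Matrix.mulVec_mulVec, x_u D hx, Matrix.smul_mulVec, ← Matrix.mulVec_mulVec]
  split_ifs with h
  · rw [he, h.neg_pow, Matrix.mulVec_smul, smul_smul, mul_comm]
  · rw [Nat.not_even_iff_odd] at h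
    rw [hf, h.neg_pow, Matrix.mulVec_smul, smul_smul]
    congr 1
    ring

theorem gv_bt (D : Dat m ζ ψ J u) {e f : N → k} (hef : bt J e f = 1) (n : ℕ) :
    bt J (gv u e f n) (gv u e f (n + m)) = 1 := by
  have hm : Even (n + m) ↔ ¬ Even n := by
    rw [Nat.even_add]
    have := D.modd
    rw [← Nat.not_even_iff_odd] at this
    tauto
  rw [gv, gv, pow_add, D.um, mul_one, bt_u D]
  by_cases h : Even n
  · simp [h, hm, hef]
  · simp [h, hm, bt_symm D.Jt f e, hef]

theorem psi_anti (D : Dat m ζ ψ J u) {t t' : ZMod (2 * m)} (h : ψ t + ψ t' = 0) : t' = t + m := by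
  have h1 : ψ (t' - (t + m)) * ψ (t + m) = ψ t' := by
    rw [← D.add, sub_add_cancel]
  rw [D.add t, D.pm] at h1
  have h2 : ψ (t' - (t + m)) = 1 := by
    have h3 := psi_ne D t
    apply mul_right_cancel₀ h3
    linear_combination -h1 - h
  exact sub_eq_zero.1 (D.inj _ h2)

theorem ext_step [IsAlgClosed k] (D : Dat m ζ ψ J u) (F : Fam ψ J u c E)
    (hc : IsCartanSubspace {x | xᵀ * J + J * x = 0 ∧ u * x * u⁻¹ = ζ • x} c)
    (hs : s < Module.finrank k c) :
    ∃ E' : Matrix N (Fin (s + 1) × ZMod (2 * m)) k, Fam ψ J u c E' := by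
  obtain ⟨hg, hcomm, hss, -⟩ := hc
  obtain ⟨χ, e, f, he, hf, hEe, hEf, hef, x0, hx0⟩ :=
    exists_ef D F (fun x hx => (hg hx).1) hcomm hss hs
  have hEg : ∀ n, (Eᵀ * J) *ᵥ gv u e f n = 0 := by
    intro n
    rw [gv]
    have h0 : (Eᵀ * J) *ᵥ (if Even n then e else f) = 0 := by split_ifs <;> assumption
    generalize (if Even n then e else f) = v at h0
    induction n with
    | zero => simpa using h0
    | succ n ih =>
      rw [pow_succ', ← Matrix.mulVec_mulVec v u, Matrix.mulVec_mulVec ((u ^ n) *ᵥ v) (Eᵀ * J) u,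
        ← Et_u D F, ← Matrix.mulVec_mulVec ((u ^ n) *ᵥ v) _ (Eᵀ * J), ih, Matrix.mulVec_zero]
  let E' : Matrix N (Fin (s + 1) × ZMod (2 * m)) k := fun i p =>
    Fin.cases (gv u e f p.2.val i) (fun j => E i (j, p.2)) p.1
  have hE0 : ∀ t, E'.col (0, t) = gv u e f t.val := fun t => rfl
  have hE1 : ∀ j t, E'.col (j.succ, t) = E.col (j, t) := fun j t => rfl
  have entry : ∀ {I : Type _} (A : Matrix N I k) (p q : I), (Aᵀ * J * A) p q = bt J (A.col p) (A.col q) := by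
    intro I A p q
    rw [Matrix.mul_assoc]
    rfl
  have ecol : ∀ {I : Type _} (B : Matrix N N k) (A : Matrix N I k) (p : I) (i : N),
      (B * A) i p = (B *ᵥ (A.col p)) i := by
    intro I B A p i
    rfl
  have hEgb : ∀ (p : Fin s × ZMod (2 * m)) n, bt J (E.col p) (gv u e f n) = 0 := by
    intro p n
    have := congrFun (hEg n) p
    rw [← Matrix.mulVec_mulVec] at this
    exact this
  refine ⟨E', ⟨?_, ?_, ?_⟩⟩
  · ext ⟨i, t⟩ ⟨j, t'⟩
    rw [entry]
    induction i using Fin.cases with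
    | zero =>
      induction j using Fin.cases with
      | zero =>
        rw [hE0, hE0]
        by_cases h : t = t' + m
        · rw [pmat_pos (by rw [h, shf_apply]), h, gv_val D, bt_symm D.Jt, gv_bt D hef]
        · rw [pmat_neg (by rw [shf_apply]; simpa using h)]
          have hx := (hg x0.2)
          have h1 := bt_x hx.1 (gv u e f t'.val) (gv u e f t.val)
          rw [x_gv D hx.2 (he x0) (hf x0), x_gv D hx.2 (he x0) (hf x0)] at h1
          have h2 := bt_smul (J := J) (χ x0 * ψ 1 ^ t'.val) 1 (gv u e f t'.val) (gv u e f t.val)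
          have h3 := bt_smul (J := J) 1 (χ x0 * ψ 1 ^ t.val) (gv u e f t'.val) (gv u e f t.val)
          rw [one_smul] at h2 h3
          rw [h2, h3, ← psi_one D, ← psi_one D, ZMod.natCast_zmod_val, ZMod.natCast_zmod_val] at h1
          have h4 : (χ x0 * (ψ t' + ψ t)) * bt J (gv u e f t'.val) (gv u e f t.val) = 0 := by
            linear_combination h1
          rw [bt_symm D.Jt]
          rcases mul_eq_zero.1 h4 with h5 | h5
          · rcases mul_eq_zero.1 h5 with h6 | h6
            · exact absurd h6 hx0
            · exact absurd (psi_anti D h6) h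
          · exact h5
      | succ j =>
        rw [hE0, hE1, pmat_neg (by rw [shf_apply]; simp [Fin.ext_iff]), bt_symm D.Jt, hEgb]
    | succ i =>
      induction j using Fin.cases with
      | zero => rw [hE0, hE1, pmat_neg (by rw [shf_apply]; simp [Fin.ext_iff]), hEgb]
      | succ j =>
        rw [hE1, hE1, ← entry, F.F1]
        by_cases h : (i, t) = shf (Fin s) (m : ZMod (2 * m)) (j, t')
        · rw [pmat_pos h, pmat_pos]
          rw [shf_apply] at h ⊢
          simpa using h
        · rw [pmat_neg h, pmat_neg]
          rw [shf_apply] at h ⊢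
          simpa using h
  · ext i ⟨j, t⟩
    rw [mul_pmat_apply, ecol]
    simp only [shf_apply]
    induction j using Fin.cases with
    | zero =>
      rw [hE0, gv_u D]
      change _ = gv u e f (t + ((m : ZMod (2 * m)) + 1)).val i
      have := gv_val D e f t (m + 1)
      push_cast at this
      rw [this]
    | succ j =>
      rw [hE1, ← ecol, F.F2, mul_pmat_apply]
      rfl
  · intro x hx
    obtain ⟨a, ha⟩ := F.F3 x hx
    refine ⟨Fin.cons (χ ⟨x, hx⟩) a, ?_⟩
    ext i ⟨j, t⟩
    rw [ecol, dm, Matrix.mul_diagonal]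
    induction j using Fin.cases with
    | zero =>
      rw [hE0, x_gv D (hg hx).2 (he ⟨x, hx⟩) (hf ⟨x, hx⟩), ← psi_one D, ZMod.natCast_zmod_val]
      simp only [Fin.cons_zero, Pi.smul_apply, smul_eq_mul]
      rw [mul_comm]
      rfl
    | succ j =>
      rw [hE1, ← ecol, ha, dm, Matrix.mul_diagonal]
      rfl

theorem exists_fam [IsAlgClosed k] (D : Dat m ζ ψ J u)
    (hc : IsCartanSubspace {x | xᵀ * J + J * x = 0 ∧ u * x * u⁻¹ = ζ • x} c) (s : ℕ)
    (hs : s ≤ Module.finrank k c) :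
    ∃ E : Matrix N (Fin s × ZMod (2 * m)) k, Fam ψ J u c E := by
  induction s with
  | zero =>
    refine ⟨0, ⟨?_, ?_, fun x hx => ⟨0, ?_⟩⟩⟩
    · ext p; exact p.1.elim0
    · ext i p; exact p.1.elim0
    · ext i p; exact p.1.elim0
  | succ s ih =>
    obtain ⟨E, F⟩ := ih (by omega)
    exact ext_step D F hc (by omega)

end extend

section weyl

variable {k : Type*} [Field k] {N : Type*} [Fintype N] [DecidableEq N]
variable {m : ℕ} [NeZero m] {ζ : k} {ψ : ZMod (2 * m) → k} {J u : Matrix N N k}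
  {c : Submodule k (Matrix N N k)} {s : ℕ} {E : Matrix N (Fin s × ZMod (2 * m)) k}

/-- the element of the orthogonal group attached to a permutation -/
def hh (J : Matrix N N k) (E : Matrix N (Fin s × ZMod (2 * m)) k)
    (τ : Equiv.Perm (Fin s × ZMod (2 * m))) : Matrix N N k :=
  1 + E * (pmat k τ - 1) * Est J E

theorem hh_mul (F : Fam ψ J u c E) (σ τ : Equiv.Perm (Fin s × ZMod (2 * m))) :
    hh J E σ * hh J E τ = hh J E (σ * τ) := by
  have key : ∀ A B : Matrix (Fin s × ZMod (2 * m)) (Fin s × ZMod (2 * m)) k,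
      (1 + E * A * Est J E) * (1 + E * B * Est J E) = 1 + E * (A + B + A * B) * Est J E := by
    intro A B
    rw [Matrix.add_mul, Matrix.mul_add (E * A * Est J E), EE_mul F, Matrix.one_mul, Matrix.mul_one,
      Matrix.mul_add E, Matrix.mul_add E, Matrix.add_mul _ _ (Est J E), Matrix.add_mul _ _ (Est J E)]
    abel
  rw [hh, hh, hh, key, pmat_mul]
  congr 3
  simp only [Matrix.mul_sub, Matrix.sub_mul, Matrix.mul_one, Matrix.one_mul]
  abel

theorem hh_one : hh J E 1 = 1 := by
  rw [hh, pmat_one, sub_self, Matrix.mul_zero, Matrix.zero_mul, add_zero]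

theorem hh_inv (F : Fam ψ J u c E) (τ : Equiv.Perm (Fin s × ZMod (2 * m))) :
    (hh J E τ)⁻¹ = hh J E τ⁻¹ := by
  apply Matrix.inv_eq_right_inv
  rw [hh_mul F, mul_inv_cancel, hh_one]

theorem hh_det (F : Fam ψ J u c E) (τ : Equiv.Perm (Fin s × ZMod (2 * m))) :
    (hh J E τ).det = ((Equiv.Perm.sign τ : ℤ) : k) := by
  rw [hh, Matrix.mul_assoc, Matrix.det_one_add_mul_comm, Matrix.mul_assoc, Est_mul F, Matrix.mul_one,
    add_sub_cancel, pmat_det]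

theorem hh_orth (D : Dat m ζ ψ J u) (F : Fam ψ J u c E) (τ : Equiv.Perm (Fin s × ZMod (2 * m)))
    (hτ : τ * shf (Fin s) (m : ZMod (2 * m)) = shf (Fin s) (m : ZMod (2 * m)) * τ) :
    (hh J E τ)ᵀ * J * hh J E τ = J := by
  have h1 : (hh J E τ)ᵀ * J = J * hh J E τ⁻¹ := by
    have hτ' : τ⁻¹ * shf (Fin s) (m : ZMod (2 * m)) = shf (Fin s) (m : ZMod (2 * m)) * τ⁻¹ := by
      rw [inv_mul_eq_iff_eq_mul, ← mul_assoc, hτ, mul_assoc, mul_inv_cancel, mul_one]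
    have hp := pmat_comm (k := k) hτ'
    simp only [hh, Est, Matrix.transpose_add, Matrix.transpose_mul, Matrix.transpose_sub,
      Matrix.transpose_one, pmat_transpose τ, D.Jt, St, Matrix.transpose_transpose]
    rw [Matrix.add_mul, Matrix.mul_add, Matrix.one_mul, Matrix.mul_one]
    congr 1
    have : pmat k (shf (Fin s) (m : ZMod (2 * m))) * (pmat k τ⁻¹ - 1)
      = (pmat k τ⁻¹ - 1) * pmat k (shf (Fin s) (m : ZMod (2 * m))) := by
      rw [Matrix.mul_sub, Matrix.sub_mul, hp, Matrix.mul_one, Matrix.one_mul]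
    calc _ = J * E * (pmat k (shf (Fin s) (m : ZMod (2 * m))) * (pmat k τ⁻¹ - 1)) * Eᵀ * J := by
          simp only [Matrix.mul_assoc]
      _ = _ := by
          rw [this]
          simp only [Matrix.mul_assoc]
  rw [h1, Matrix.mul_assoc, hh_mul F, inv_mul_cancel, hh_one, Matrix.mul_one]

theorem hh_u (D : Dat m ζ ψ J u) (F : Fam ψ J u c E) (τ : Equiv.Perm (Fin s × ZMod (2 * m)))
    (hτ : τ * shf (Fin s) ((m : ZMod (2 * m)) + 1) = shf (Fin s) ((m : ZMod (2 * m)) + 1) * τ) :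
    hh J E τ * u = u * hh J E τ := by
  have hp := pmat_comm (k := k) hτ
  rw [hh, Matrix.mul_add, Matrix.add_mul, u_EE F, EE_u D F, Matrix.mul_sub, Matrix.sub_mul, hp]
  simp only [Matrix.mul_one, Matrix.one_mul]

/-- the monomial permutation. -/
def tau (σ : Equiv.Perm (Fin s)) (a : Fin s → ZMod (2 * m)) :
    Equiv.Perm (Fin s × ZMod (2 * m)) where
  toFun p := (σ p.1, p.2 - a p.1)
  invFun p := (σ⁻¹ p.1, p.2 + a (σ⁻¹ p.1))
  left_inv p := by simp
  right_inv p := by simp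

theorem tau_apply (σ : Equiv.Perm (Fin s)) (a : Fin s → ZMod (2 * m)) (p : Fin s × ZMod (2 * m)) :
    tau σ a p = (σ p.1, p.2 - a p.1) := rfl

theorem tau_shf (σ : Equiv.Perm (Fin s)) (a : Fin s → ZMod (2 * m)) (b : ZMod (2 * m)) :
    tau σ a * shf (Fin s) b = shf (Fin s) b * tau σ a := by
  ext p
  · simp [tau_apply, shf_apply]
  · simp only [Equiv.Perm.mul_apply, tau_apply, shf_apply]
    ring

theorem sign_sub (M : ℕ) [NeZero M] (hM : Even M) (a : ZMod M) :
    Equiv.Perm.sign (Equiv.subRight a) = (-1) ^ a.val := by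
  have h1 : Equiv.Perm.sign (Equiv.addRight (1 : ZMod M)) = -1 := by
    obtain ⟨n, rfl⟩ : ∃ n, M = n + 1 := ⟨M - 1, by have := NeZero.ne M; omega⟩
    have h2 : Equiv.addRight (1 : ZMod (n + 1)) = finRotate (n + 1) := by
      apply Equiv.ext
      intro i
      exact (finRotate_apply (n := n + 1) i).symm
    have h3 := sign_finRotate (n + 1)
    have h4 : Odd n := by
      rw [Nat.even_add_one] at hM
      exact Nat.not_even_iff_odd.1 hM
    rw [Nat.add_sub_cancel, h4.neg_one_pow] at h3
    rw [← h3]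
    exact congrArg _ h2
  have h2 : ∀ n : ℕ, Equiv.addRight (n : ZMod M) = Equiv.addRight (1 : ZMod M) ^ n := by
    intro n
    induction n with
    | zero => ext; simp
    | succ n ih =>
      rw [pow_succ', ← ih]
      ext x
      simp [add_assoc]
  have h3 : Equiv.subRight a = (Equiv.addRight a)⁻¹ := by
    apply Equiv.ext
    intro x
    rw [Equiv.Perm.eq_inv_iff_eq]
    simp
  rw [h3, Equiv.Perm.sign_inv]
  conv_lhs => rw [← ZMod.natCast_zmod_val a]
  rw [h2, map_pow, h1]

theorem sign_tau (D : Dat m ζ ψ J u) (σ : Equiv.Perm (Fin s)) (a : Fin s → ZMod (2 * m)) :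
    ((Equiv.Perm.sign (tau σ a) : ℤ) : k) = (∏ j, ψ (a j)) ^ m := by
  have h1 : tau σ a = Equiv.prodCongrLeft (fun _ : ZMod (2 * m) => σ)
      * Equiv.prodCongrRight (fun j => Equiv.subRight (a j)) := by
    ext p <;> simp [tau_apply]
  have h2 : Equiv.Perm.sign (tau σ a) = ∏ j, (-1 : ℤˣ) ^ (a j).val := by
    rw [h1, Equiv.Perm.sign_mul, Equiv.Perm.sign_prodCongrLeft, Equiv.Perm.sign_prodCongrRight,
      Finset.prod_const, Finset.card_univ, ZMod.card, pow_mul, Int.units_sq, one_pow, one_mul]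
    exact Finset.prod_congr rfl fun j _ => sign_sub _ (even_two_mul m) _
  rw [h2, ← Finset.prod_pow]
  push_cast
  apply Finset.prod_congr rfl
  intro j _
  rw [psi_nat D, ← D.pm, psi_nat D, ZMod.natCast_zmod_val, mul_comm]

theorem psi_neg (D : Dat m ζ ψ J u) (t : ZMod (2 * m)) : ψ t * ψ (-t) = 1 := by
  rw [← D.add, add_neg_cancel, D.zero]

theorem hh_bb (D : Dat m ζ ψ J u) (F : Fam ψ J u c E) (σ : Equiv.Perm (Fin s))
    (a : Fin s → ZMod (2 * m)) (j : Fin s) :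
    hh J E (tau σ a) * bb ψ J E j * (hh J E (tau σ a))⁻¹ = ψ (a j) • bb ψ J E (σ j) := by
  have h1 : hh J E (tau σ a) * bb ψ J E j
      = E * (pmat k (tau σ a) * dm ψ (Pi.single j 1)) * Est J E := by
    rw [hh, bb, Matrix.add_mul, EE_mul F, Matrix.one_mul, Matrix.sub_mul, Matrix.one_mul,
      ← Matrix.add_mul, ← Matrix.mul_add, add_sub_cancel]
  have h2 : bb ψ J E (σ j) * hh J E (tau σ a)
      = E * (dm ψ (Pi.single (σ j) 1) * pmat k (tau σ a)) * Est J E := by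
    rw [hh, bb, Matrix.mul_add, EE_mul F, Matrix.mul_one, Matrix.mul_sub, Matrix.mul_one,
      ← Matrix.add_mul, ← Matrix.mul_add, add_sub_cancel]
  have h3 : pmat k (tau σ a) * dm ψ (Pi.single j 1)
      = ψ (a j) • (dm ψ (Pi.single (σ j) 1) * pmat k (tau σ a)) := by
    rw [dm, dm, ← pmat_mul_diag, ← Matrix.mul_smul]
    congr 1
    rw [← Matrix.diagonal_smul]
    congr 1
    ext p
    simp only [tau_apply, Pi.smul_apply, smul_eq_mul, Pi.single_apply, EmbeddingLike.apply_eq_iff_eq]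
    split_ifs with h
    · rw [h, sub_eq_add_neg, D.add]
      linear_combination (-ψ p.2) * psi_neg D (a j)
    · simp
  have h4 : hh J E (tau σ a) * bb ψ J E j = ψ (a j) • (bb ψ J E (σ j) * hh J E (tau σ a)) := by
    rw [h1, h2, h3, Matrix.mul_smul, Matrix.smul_mul]
  rw [h4, hh_inv F, Matrix.smul_mul, Matrix.mul_assoc, hh_mul F, mul_inv_cancel, hh_one,
    Matrix.mul_one]

theorem EE_pow (F : Fam ψ J u c E) (A : Matrix (Fin s × ZMod (2 * m)) (Fin s × ZMod (2 * m)) k)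
    (n : ℕ) : (E * A * Est J E) ^ (n + 1) = E * (A ^ (n + 1)) * Est J E := by
  induction n with
  | zero => simp
  | succ n ih => rw [pow_succ, ih, EE_mul F, pow_succ _ (n + 1)]

theorem weyl_mono (D : Dat m ζ ψ J u) (F : Fam ψ J u c E) {h : Matrix N N k} (hd : IsUnit h.det)
    {w : Matrix (Fin s) (Fin s) k}
    (hw : ∀ j, h * bb ψ J E j * h⁻¹ = ∑ i, w i j • bb ψ J E i) :
    ∃ σ : Equiv.Perm (Fin s), (∀ i j, i ≠ σ j → w i j = 0) ∧ (∀ j, w (σ j) j ^ (2 * m) = 1) := by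
  have hih : h⁻¹ * h = 1 := Matrix.nonsing_inv_mul _ hd
  have hw' : ∀ j, h * bb ψ J E j * h⁻¹ = E * dm ψ (fun i => w i j) * Est J E := by
    intro j
    rw [hw, ← sum_bb]
  have hpow : ∀ i j, w i j ^ (2 * m + 1) = w i j := by
    intro i j
    have h1 : (h * bb ψ J E j * h⁻¹) ^ (2 * m + 1) = h * bb ψ J E j * h⁻¹ := by
      have : ∀ n : ℕ, (h * bb ψ J E j * h⁻¹) ^ (n + 1) = h * bb ψ J E j ^ (n + 1) * h⁻¹ := by
        intro n
        induction n with
        | zero => simp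
        | succ n ih =>
          rw [pow_succ, ih, pow_succ _ (n + 1)]
          calc _ = h * bb ψ J E j ^ (n + 1) * (h⁻¹ * h) * bb ψ J E j * h⁻¹ := by
                simp only [Matrix.mul_assoc]
            _ = _ := by rw [hih, Matrix.mul_one]; simp only [Matrix.mul_assoc]
      rw [this, bb_pow D F]
    rw [hw', EE_pow F] at h1
    have h2 := EE_inj F h1
    rw [dm, Matrix.diagonal_pow] at h2
    have h3 := congrFun (Matrix.diagonal_injective h2) (i, 0)
    simpa [D.zero] using h3
  have hmul : ∀ i j l, j ≠ l → w i j * w i l = 0 := by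
    intro i j l hjl
    have h1 : (h * bb ψ J E j * h⁻¹) * (h * bb ψ J E l * h⁻¹) = 0 := by
      calc _ = h * bb ψ J E j * (h⁻¹ * h) * bb ψ J E l * h⁻¹ := by simp only [Matrix.mul_assoc]
        _ = h * (bb ψ J E j * bb ψ J E l) * h⁻¹ := by
          rw [hih, Matrix.mul_one]; simp only [Matrix.mul_assoc]
        _ = 0 := by rw [bb_mul F hjl, Matrix.mul_zero, Matrix.zero_mul]
    rw [hw', hw', EE_mul F] at h1
    have h2 : dm ψ (fun i => w i j) * dm ψ (fun i => w i l) = 0 :=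
      EE_inj F (by rw [h1, Matrix.mul_zero, Matrix.zero_mul])
    have h3 := congrFun (congrFun h2 (i, 0)) (i, 0)
    rw [dm, dm, Matrix.diagonal_mul_diagonal, Matrix.diagonal_apply_eq] at h3
    simpa [D.zero] using h3
  have hcol : ∀ j, ∃ i, w i j ≠ 0 := by
    intro j
    by_contra hcon
    push Not at hcon
    have h1 := hw j
    simp only [hcon, zero_smul, Finset.sum_const_zero] at h1
    apply (bb_li D F).ne_zero j
    calc bb ψ J E j = (h⁻¹ * h) * bb ψ J E j * (h⁻¹ * h) := by
          rw [hih, Matrix.one_mul, Matrix.mul_one]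
      _ = h⁻¹ * (h * bb ψ J E j * h⁻¹) * h := by simp only [Matrix.mul_assoc]
      _ = 0 := by rw [h1, Matrix.mul_zero, Matrix.zero_mul]
  choose f hf using hcol
  have hinj : Function.Injective f := by
    intro j l hjl
    by_contra hne
    have h1 := hmul (f j) j l hne
    rcases mul_eq_zero.1 h1 with h2 | h2
    · exact hf j h2
    · rw [hjl] at h2
      exact hf l h2
  refine ⟨Equiv.ofBijective f (Finite.injective_iff_bijective.1 hinj), ?_, ?_⟩
  · intro i j hij
    obtain ⟨l, rfl⟩ := (Finite.injective_iff_bijective.1 hinj).2 i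
    have hlj : l ≠ j := by
      rintro rfl
      exact hij rfl
    rcases mul_eq_zero.1 (hmul (f l) l j hlj) with h2 | h2
    · exact absurd h2 (hf l)
    · exact h2
  · intro j
    have h1 := hpow (f j) j
    rw [pow_succ] at h1
    exact mul_right_cancel₀ (hf j) (by rw [one_mul]; exact h1)

theorem no_x (D : Dat m ζ ψ J u) (F : Fam ψ J u c E) (hcard : Fintype.card N ≤ 2 * m * s)
    {z : Matrix N N k} (hz : zᵀ * J * z = J) (hzb : ∀ j, z * bb ψ J E j = bb ψ J E j * z) :
    z.det = 1 := by
  have hI : Fintype.card (Fin s × ZMod (2 * m)) = 2 * m * s := by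
    rw [Fintype.card_prod, Fintype.card_fin, ZMod.card, mul_comm]
  have h1 := Est_mul F
  have hc1 : Fintype.card (Fin s × ZMod (2 * m)) ≤ Fintype.card N := by
    have e1 : (Est J E * E).rank ≤ Fintype.card N :=
      (Matrix.rank_mul_le_left _ _).trans (Matrix.rank_le_card_width _)
    rwa [h1, Matrix.rank_one] at e1
  have e : Fintype.card (Fin s × ZMod (2 * m)) = Fintype.card N := le_antisymm hc1 (by omega)
  have h2 : E * Est J E = 1 := (Matrix.mul_eq_one_comm_of_equiv (Fintype.equivOfCardEq e)).1 h1
  have hdet : (Est J E * z * E).det = z.det := Matrix.det_conj_of_mul_eq_one h1 h2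
  have hzE : z * E = E * (Est J E * z * E) := by
    rw [← Matrix.mul_assoc, ← Matrix.mul_assoc, h2, Matrix.one_mul]
  set Z := Est J E * z * E with hZ
  have hZS : Zᵀ * pmat k (shf (Fin s) (m : ZMod (2 * m))) * Z
      = pmat k (shf (Fin s) (m : ZMod (2 * m))) := by
    rw [← F.F1]
    calc _ = (E * Z)ᵀ * J * (E * Z) := by
          rw [Matrix.transpose_mul E Z]; simp only [Matrix.mul_assoc]
      _ = Eᵀ * (zᵀ * J * z) * E := by
          rw [← hzE, Matrix.transpose_mul]; simp only [Matrix.mul_assoc]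
      _ = _ := by rw [hz]
  have hZD : ∀ j, Z * dm ψ (Pi.single j 1) = dm ψ (Pi.single j 1) * Z := by
    intro j
    have := congrArg (fun X => Est J E * X * E) (hzb j)
    simp only [bb] at this
    calc _ = Est J E * (z * (E * dm ψ (Pi.single j 1) * Est J E)) * E := by
          rw [hZ]
          simp only [Matrix.mul_assoc]
          rw [h1, Matrix.mul_one]
      _ = _ := this
      _ = (Est J E * E) * dm ψ (Pi.single j 1) * (Est J E * z * E) := by
          simp only [Matrix.mul_assoc]
      _ = _ := by rw [h1, Matrix.one_mul]
  have hoff : ∀ p q, p ≠ q → Z p q = 0 := by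
    intro p q hpq
    have h3 := congrFun (congrFun (hZD q.1) p) q
    rw [dm, Matrix.mul_diagonal, Matrix.diagonal_mul, Pi.single_eq_same, one_mul,
      Pi.single_apply] at h3
    split_ifs at h3 with h4
    · have h5 : p.2 - q.2 ≠ 0 := by
        intro h
        exact hpq (Prod.ext h4 (sub_eq_zero.1 h))
      have h6 : ψ p.2 = ψ (p.2 - q.2) * ψ q.2 := by rw [← D.add, sub_add_cancel]
      have h7 : Z p q * (ψ q.2 * (1 - ψ (p.2 - q.2))) = 0 := by
        rw [h6] at h3
        linear_combination h3
      rcases mul_eq_zero.1 h7 with h8 | h8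
      · exact h8
      · rcases mul_eq_zero.1 h8 with h9 | h9
        · exact absurd h9 (psi_ne D _)
        · exact absurd (D.inj _ (sub_eq_zero.1 h9).symm) h5
    · rw [zero_mul, zero_mul] at h3
      rcases mul_eq_zero.1 h3 with h8 | h8
      · exact h8
      · exact absurd h8 (psi_ne D _)
  have hZdiag : Z = diagonal (fun p => Z p p) := by
    ext p q
    by_cases h : p = q
    · rw [h, Matrix.diagonal_apply_eq]
    · rw [Matrix.diagonal_apply_ne _ h, hoff p q h]
  have hprod : ∀ q, Z q q * Z (shf (Fin s) (m : ZMod (2 * m)) q) (shf (Fin s) (m : ZMod (2 * m)) q)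
      = 1 := by
    intro q
    have h3 := congrFun (congrFun hZS (shf (Fin s) (m : ZMod (2 * m)) q)) q
    generalize hd : (fun p => Z p p) = d at hZdiag
    rw [hZdiag, Matrix.diagonal_transpose, Matrix.mul_diagonal, Matrix.diagonal_mul,
      pmat_pos rfl, mul_one] at h3
    subst hd
    rw [mul_comm]
    exact h3
  have hm0 : (m : ZMod (2 * m)) ≠ 0 := by
    intro h
    have h3 := D.pm
    rw [h, D.zero] at h3
    apply D.two
    linear_combination h3
  rw [← hdet, hZdiag, Matrix.det_diagonal]
  refine Finset.prod_involution (fun q _ => shf (Fin s) (m : ZMod (2 * m)) q) ?_ ?_ ?_ ?_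
  · intro q _
    exact hprod q
  · intro q _ _ h
    rw [shf_apply] at h
    have := congrArg Prod.snd h
    simp only [add_eq_left] at this
    exact hm0 this
  · intro q _
    exact Finset.mem_univ _
  · intro q _
    rw [shf_apply, shf_apply, add_assoc, two_m_zero, add_zero]

end weyl
section final

variable {k : Type*} [Field k] {N : Type*} [Fintype N] [DecidableEq N]
variable {m : ℕ} [NeZero m] {ζ : k} {ψ : ZMod (2 * m) → k} {J u : Matrix N N k}
  {c : Submodule k (Matrix N N k)} {s : ℕ} {E : Matrix N (Fin s × ZMod (2 * m)) k}

theorem span_conj (hspan : Submodule.span k (Set.range (bb ψ J E)) = c) {g h : Matrix N N k}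
    (hb : ∀ j, g * bb ψ J E j * h ∈ c) : ∀ x ∈ c, g * x * h ∈ c := by
  intro x hx
  rw [← hspan] at hx
  induction hx using Submodule.span_induction with
  | mem x hx =>
    obtain ⟨j, rfl⟩ := hx
    exact hb j
  | zero => simp
  | add x y _ _ h1 h2 =>
    rw [Matrix.mul_add, Matrix.add_mul]
    exact c.add_mem h1 h2
  | smul a x _ h1 =>
    rw [Matrix.mul_smul, Matrix.smul_mul]
    exact c.smul_mem a h1

theorem span_comm (hspan : Submodule.span k (Set.range (bb ψ J E)) = c) {z : Matrix N N k}
    (hb : ∀ j, z * bb ψ J E j = bb ψ J E j * z) : ∀ x ∈ c, z * x = x * z := by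
  intro x hx
  rw [← hspan] at hx
  induction hx using Submodule.span_induction with
  | mem x hx =>
    obtain ⟨j, rfl⟩ := hx
    exact hb j
  | zero => simp
  | add x y _ _ h1 h2 => rw [Matrix.mul_add, Matrix.add_mul, h1, h2]
  | smul a x _ h1 => rw [Matrix.mul_smul, Matrix.smul_mul, h1]

theorem hh_norm (D : Dat m ζ ψ J u) (F : Fam ψ J u c E)
    (hspan : Submodule.span k (Set.range (bb ψ J E)) = c)
    (σ : Equiv.Perm (Fin s)) (a : Fin s → ZMod (2 * m)) :
    (∀ x ∈ c, hh J E (tau σ a) * x * (hh J E (tau σ a))⁻¹ ∈ c) ∧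
    (∀ x ∈ c, (hh J E (tau σ a))⁻¹ * x * hh J E (tau σ a) ∈ c) := by
  have hmem : ∀ j, bb ψ J E j ∈ c := fun j => by
    rw [← hspan]; exact Submodule.subset_span ⟨j, rfl⟩
  have hii : (hh J E (tau σ a))⁻¹ * hh J E (tau σ a) = 1 := by
    rw [hh_inv F, hh_mul F, inv_mul_cancel, hh_one]
  constructor
  · apply span_conj hspan
    intro j
    rw [hh_bb D F]
    exact c.smul_mem _ (hmem _)
  · apply span_conj hspan
    intro j
    obtain ⟨j, rfl⟩ := σ.surjective j
    have h1 : bb ψ J E (σ j) = ψ (-a j) • (hh J E (tau σ a) * bb ψ J E j * (hh J E (tau σ a))⁻¹) := by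
      rw [hh_bb D F, smul_smul, mul_comm, psi_neg D, one_smul]
    rw [h1, Matrix.mul_smul, Matrix.smul_mul]
    apply c.smul_mem
    have : (hh J E (tau σ a))⁻¹ * (hh J E (tau σ a) * bb ψ J E j * (hh J E (tau σ a))⁻¹)
        * hh J E (tau σ a) = ((hh J E (tau σ a))⁻¹ * hh J E (tau σ a)) * bb ψ J E j
        * ((hh J E (tau σ a))⁻¹ * hh J E (tau σ a)) := by simp only [Matrix.mul_assoc]
    rw [this, hii, Matrix.one_mul, Matrix.mul_one]
    exact hmem j

theorem realize (D : Dat m ζ ψ J u) (F : Fam ψ J u c E)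
    (hroot : ∀ y : k, y ^ (2 * m) = 1 → ∃ t, ψ t = y)
    {w : Matrix (Fin s) (Fin s) k} {σ : Equiv.Perm (Fin s)}
    (h0 : ∀ i j, i ≠ σ j → w i j = 0) (h1 : ∀ j, w (σ j) j ^ (2 * m) = 1) :
    ∃ a : Fin s → ZMod (2 * m), (hh J E (tau σ a)).det = (∏ j, w (σ j) j) ^ m ∧
      ∀ j, hh J E (tau σ a) * bb ψ J E j * (hh J E (tau σ a))⁻¹ = ∑ i, w i j • bb ψ J E i := by
  choose a ha using fun j => hroot _ (h1 j)
  refine ⟨a, ?_, ?_⟩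
  · rw [hh_det F, sign_tau D]
    simp only [ha]
  · intro j
    rw [hh_bb D F, ha, Finset.sum_eq_single (σ j)]
    · intro i _ hi
      rw [h0 i j hi, zero_smul]
    · intro h
      exact absurd (Finset.mem_univ _) h

theorem hh_pm (F : Fam ψ J u c E) (τ : Equiv.Perm (Fin s × ZMod (2 * m))) :
    (hh J E τ).det = 1 ∨ (hh J E τ).det = -1 := by
  rw [hh_det F]
  rcases Int.units_eq_one_or (Equiv.Perm.sign τ) with h | h <;> rw [h] <;> simp

theorem main_a (D : Dat m ζ ψ J u) (F : Fam ψ J u c E)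
    (hspan : Submodule.span k (Set.range (bb ψ J E)) = c)
    (hroot : ∀ y : k, y ^ (2 * m) = 1 → ∃ t, ψ t = y)
    {x : Matrix N N k} (hxJ : xᵀ * J * x = J) (hxd : x.det = -1) (hxu : x * u = u * x)
    (hxc : ∀ y ∈ c, x * y = y * x) :
    littleWeylSet {h | hᵀ * J * h = J ∧ h.det = 1 ∧ h * u = u * h} c (bb ψ J E)
      = GmqrSet k (2 * m) 1 s := by
  ext w
  constructor
  · rintro ⟨h, ⟨-, hd, -⟩, -, -, hw⟩
    obtain ⟨σ, h0, h1⟩ := weyl_mono D F (by rw [hd]; exact isUnit_one) hw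
    refine ⟨σ, h0, h1, ?_⟩
    rw [Nat.div_one, ← Finset.prod_pow]
    exact Finset.prod_eq_one fun j _ => h1 j
  · rintro ⟨σ, h0, h1, -⟩
    obtain ⟨a, -, hab⟩ := realize D F hroot h0 h1
    obtain ⟨n1, n2⟩ := hh_norm D F hspan σ a
    have hJ := hh_orth D F _ (tau_shf σ a _)
    have hu := hh_u D F _ (tau_shf σ a _)
    have hpm := hh_pm F (tau σ a)
    set g := hh J E (tau σ a) with hg
    rcases hpm with hd | hd
    · exact ⟨g, ⟨hJ, hd, hu⟩, n1, n2, hab⟩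
    · have hxx : x * x⁻¹ = 1 := Matrix.mul_nonsing_inv _ (by rw [hxd]; exact isUnit_one.neg)
      have hxx' : x⁻¹ * x = 1 := Matrix.nonsing_inv_mul _ (by rw [hxd]; exact isUnit_one.neg)
      have e1 : ∀ y ∈ c, g * x * y * (g * x)⁻¹ = g * y * g⁻¹ := by
        intro y hy
        rw [Matrix.mul_inv_rev]
        calc _ = g * (x * y) * x⁻¹ * g⁻¹ := by simp only [Matrix.mul_assoc]
          _ = g * y * (x * x⁻¹) * g⁻¹ := by rw [hxc y hy]; simp only [Matrix.mul_assoc]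
          _ = _ := by rw [hxx, Matrix.mul_one]
      have e2 : ∀ y ∈ c, (g * x)⁻¹ * y * (g * x) = g⁻¹ * y * g := by
        intro y hy
        rw [Matrix.mul_inv_rev]
        calc _ = x⁻¹ * ((g⁻¹ * y * g) * x) := by simp only [Matrix.mul_assoc]
          _ = (x⁻¹ * x) * (g⁻¹ * y * g) := by
            rw [← hxc _ (n2 y hy)]; simp only [Matrix.mul_assoc]
          _ = _ := by rw [hxx', Matrix.one_mul]
      refine ⟨g * x, ⟨?_, ?_, ?_⟩, ?_, ?_, ?_⟩
      · calc _ = xᵀ * (gᵀ * J * g) * x := by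
              rw [Matrix.transpose_mul]; simp only [Matrix.mul_assoc]
          _ = J := by rw [hJ, hxJ]
      · rw [Matrix.det_mul, hd, hxd]; ring
      · rw [Matrix.mul_assoc, hxu, ← Matrix.mul_assoc, hu, Matrix.mul_assoc]
      · intro y hy
        rw [e1 y hy]
        exact n1 y hy
      · intro y hy
        rw [e2 y hy]
        exact n2 y hy
      · intro j
        rw [e1 _ (by rw [← hspan]; exact Submodule.subset_span ⟨j, rfl⟩), hab]

theorem main_b (D : Dat m ζ ψ J u) (F : Fam ψ J u c E)
    (hspan : Submodule.span k (Set.range (bb ψ J E)) = c)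
    (hroot : ∀ y : k, y ^ (2 * m) = 1 → ∃ t, ψ t = y)
    (hno : ∀ x : Matrix N N k, xᵀ * J * x = J → x * u = u * x →
      (∀ y ∈ c, x * y = y * x) → x.det ≠ -1) :
    littleWeylSet {h | hᵀ * J * h = J ∧ h.det = 1 ∧ h * u = u * h} c (bb ψ J E)
      = GmqrSet k (2 * m) 2 s := by
  have h22 : 2 * m / 2 = m := by omega
  ext w
  constructor
  · rintro ⟨h, ⟨hJ, hd, hu⟩, -, -, hw⟩
    have hdu : IsUnit h.det := by rw [hd]; exact isUnit_one
    obtain ⟨σ, h0, h1⟩ := weyl_mono D F hdu hw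
    refine ⟨σ, h0, h1, ?_⟩
    rw [h22]
    obtain ⟨a, had, hab⟩ := realize D F hroot h0 h1
    rw [← had]
    rcases hh_pm F (tau σ a) with hd' | hd'
    · exact hd'
    exfalso
    have tc : ∀ b, (tau σ a)⁻¹ * shf (Fin s) b = shf (Fin s) b * (tau σ a)⁻¹ := fun b =>
      (show Commute (tau σ a) (shf (Fin s) b) from tau_shf σ a b).inv_left
    have gJ := hh_orth D F _ (tc _)
    have gu := hh_u D F _ (tc _)
    have gg : (hh J E (tau σ a))⁻¹ * hh J E (tau σ a) = 1 := by
      rw [hh_inv F, hh_mul F, inv_mul_cancel, hh_one]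
    rw [← hh_inv F] at gJ gu
    set g := hh J E (tau σ a) with hg
    have hhi : h⁻¹ * h = 1 := Matrix.nonsing_inv_mul _ hdu
    refine hno (g⁻¹ * h) ?_ ?_ ?_ ?_
    · calc _ = hᵀ * (g⁻¹ᵀ * J * g⁻¹) * h := by
            rw [Matrix.transpose_mul]; simp only [Matrix.mul_assoc]
        _ = J := by rw [gJ, hJ]
    · rw [Matrix.mul_assoc, hu, ← Matrix.mul_assoc, gu, Matrix.mul_assoc]
    · apply span_comm hspan
      intro j
      have e1 : h * bb ψ J E j = (∑ i, w i j • bb ψ J E i) * h := by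
        rw [← hw j, Matrix.mul_assoc (h * _), hhi, Matrix.mul_one]
      have e2 : g⁻¹ * (∑ i, w i j • bb ψ J E i) = bb ψ J E j * g⁻¹ := by
        rw [← hab j, ← Matrix.mul_assoc, ← Matrix.mul_assoc, gg, Matrix.one_mul]
      rw [Matrix.mul_assoc, e1, ← Matrix.mul_assoc, e2, Matrix.mul_assoc]
    · have : g⁻¹.det * g.det = 1 := by rw [← Matrix.det_mul, gg, Matrix.det_one]
      rw [hd'] at this
      rw [Matrix.det_mul, hd]
      linear_combination -this
  · rintro ⟨σ, h0, h1, h2⟩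
    rw [h22] at h2
    obtain ⟨a, had, hab⟩ := realize D F hroot h0 h1
    obtain ⟨n1, n2⟩ := hh_norm D F hspan σ a
    exact ⟨hh J E (tau σ a), ⟨hh_orth D F _ (tau_shf σ a _), by rw [had, h2],
      hh_u D F _ (tau_shf σ a _)⟩, n1, n2, hab⟩

end final

theorem antidiagJ_transpose (k : Type*) [Field k] (N : ℕ) : (antidiagJ k N)ᵀ = antidiagJ k N := by
  ext i j
  simp only [antidiagJ, Matrix.transpose_apply, Matrix.of_apply, add_comm]

theorem antidiagJ_sq (k : Type*) [Field k] (N : ℕ) : antidiagJ k N * antidiagJ k N = 1 := by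
  ext i j
  rw [Matrix.mul_apply, Finset.sum_eq_single (Fin.rev i)]
  · simp only [antidiagJ, Matrix.of_apply, Fin.val_rev, Matrix.one_apply, Fin.ext_iff]
    have hi := i.2
    have hj := j.2
    rw [if_pos (by omega), one_mul]
    by_cases h : (i : ℕ) = j
    · rw [if_pos (by omega), if_pos h]
    · rw [if_neg (by omega), if_neg h]
  · intro l _ hl
    have hi := i.2
    have hl2 := l.2
    simp only [antidiagJ, Matrix.of_apply]
    rw [if_neg, zero_mul]
    intro h
    apply hl
    apply Fin.ext
    rw [Fin.val_rev]
    omega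
  · intro h
    exact absurd (Finset.mem_univ _) h

theorem exists_psi {k : Type*} [Field k] (h2 : (2 : k) ≠ 0) {m : ℕ} [NeZero m] (hm : Odd m) {ζ : k}
    (hζ : IsPrimitiveRoot ζ m) :
    ∃ ψ : ZMod (2 * m) → k, (∀ s t, ψ (s + t) = ψ s * ψ t) ∧ ψ 0 = 1 ∧ ψ m = -1 ∧
      ψ (m + 1) * ζ = 1 ∧ (∀ t, ψ t = 1 → t = 0) ∧ ∀ y : k, y ^ (2 * m) = 1 → ∃ t, ψ t = y := by
  have hm0 : m ≠ 0 := NeZero.ne m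
  have hζ0 : ζ ≠ 0 := hζ.ne_zero hm0
  have h1 : IsPrimitiveRoot (-1 : k) 2 := by
    refine IsPrimitiveRoot.mk_of_lt _ (by norm_num) (by ring) ?_
    intro l hl hl2 h
    obtain rfl : l = 1 := by omega
    apply h2
    linear_combination -h
  have hη : IsPrimitiveRoot (-1 * ζ⁻¹) (2 * m) := by
    have e1 : orderOf (-1 : k) = 2 := h1.eq_orderOf.symm
    have e2 : orderOf (ζ⁻¹) = m := hζ.inv.eq_orderOf.symm
    have := (Commute.all (-1 : k) ζ⁻¹).orderOf_mul_eq_mul_orderOf_of_coprime (by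
      rw [e1, e2]; exact (Nat.coprime_two_left).2 hm)
    rw [e1, e2] at this
    rw [← this]
    exact IsPrimitiveRoot.orderOf _
  set η := -1 * ζ⁻¹ with hηd
  have hp : ∀ n : ℕ, η ^ (n % (2 * m)) = η ^ n := fun n => by
    
    conv_lhs => rw [hη.eq_orderOf]
    exact pow_mod_orderOf _ _
  have hcast : ∀ n : ℕ, η ^ (n : ZMod (2 * m)).val = η ^ n := fun n => by
    rw [ZMod.val_natCast, hp]
  have hηm : η ^ m = -1 := by
    rw [hηd, mul_pow, hm.neg_one_pow, inv_pow, hζ.pow_eq_one]; simp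
  refine ⟨fun t => η ^ t.val, ?_, ?_, ?_, ?_, ?_, ?_⟩
  · intro s t
    simp only
    rw [ZMod.val_add, hp, pow_add]
  · simp
  · simp only
    rw [hcast, hηm]
  · have := hcast (m + 1)
    push_cast at this
    simp only
    rw [this, pow_succ, hηm, hηd]
    field_simp
  · intro t ht
    have := hη.dvd_of_pow_eq_one _ ht
    rw [← ZMod.natCast_zmod_val t]
    exact (ZMod.natCast_eq_zero_iff _ _).2 this
  · intro y hy
    obtain ⟨i, -, hi⟩ := hη.eq_pow_of_pow_eq_one hy
    exact ⟨i, by simp only; rw [hcast, hi]⟩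
/-- little Weyl group of an inner automorphism of `SO(2n,k)` of
odd order exactly `m`, given by `u ∈ SO(2n,k)` with `u^m = I`: with respect
to a suitable basis of a Cartan subspace `c` (of dimension `r`) it equals
`G(2m,1,r)` if `n > mr` and some `x ∈ O(2n,k)` of determinant `-1` commutes
with `u` and with every element of `c`; otherwise it equals `G(2m,2,r)`. -/
theorem stmt13 {k : Type*} [Field k] [IsAlgClosed k]
    (hchar : ringChar k = 0 ∨ 2 < ringChar k)
    (m : ℕ) (hm : 0 < m) (hmodd : Odd m) (hmchar : ¬ (ringChar k ∣ m))
    (ζ : k) (hζ : IsPrimitiveRoot ζ m)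
    (n : ℕ) (hn : 2 ≤ n)
    (u : Matrix (Fin (2 * n)) (Fin (2 * n)) k)
    (huO : u.transpose * antidiagJ k (2 * n) * u = antidiagJ k (2 * n))
    (hudet : u.det = 1)
    (hordm : u ^ m = 1)
    (hordleast : ∀ j : ℕ, 0 < j → j < m → u ^ j ≠ 1 ∧ u ^ j ≠ -1)
    (c : Submodule k (Matrix (Fin (2 * n)) (Fin (2 * n)) k))
    (hc : IsCartanSubspace
      {x | x.transpose * antidiagJ k (2 * n) + antidiagJ k (2 * n) * x = 0 ∧
        u * x * u⁻¹ = ζ • x} c)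
    (r : ℕ) (hr : Module.finrank k c = r) :
    ∃ b : Fin r → Matrix (Fin (2 * n)) (Fin (2 * n)) k,
      LinearIndependent k b ∧ Submodule.span k (Set.range b) = c ∧
      ((n > m * r ∧ ∃ x : Matrix (Fin (2 * n)) (Fin (2 * n)) k,
          x.transpose * antidiagJ k (2 * n) * x = antidiagJ k (2 * n) ∧
          x.det = -1 ∧ x * u = u * x ∧ ∀ y ∈ c, x * y = y * x) →
        littleWeylSet
          {h | h.transpose * antidiagJ k (2 * n) * h = antidiagJ k (2 * n) ∧
            h.det = 1 ∧ h * u = u * h} c b = GmqrSet k (2 * m) 1 r) ∧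
      (¬ (n > m * r ∧ ∃ x : Matrix (Fin (2 * n)) (Fin (2 * n)) k,
          x.transpose * antidiagJ k (2 * n) * x = antidiagJ k (2 * n) ∧
          x.det = -1 ∧ x * u = u * x ∧ ∀ y ∈ c, x * y = y * x) →
        littleWeylSet
          {h | h.transpose * antidiagJ k (2 * n) * h = antidiagJ k (2 * n) ∧
            h.det = 1 ∧ h * u = u * h} c b = GmqrSet k (2 * m) 2 r) := by
  have : NeZero m := ⟨by omega⟩
  have h2 : (2 : k) ≠ 0 := by
    intro h
    have h3 : ringChar k ∣ 2 := (ringChar.spec k 2).1 (by exact_mod_cast h)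
    rcases hchar with h4 | h4
    · rw [h4] at h3
      simp at h3
    · have := Nat.le_of_dvd (by norm_num) h3
      omega
  have hmk : (m : k) ≠ 0 := by
    intro h
    exact hmchar ((ringChar.spec k m).1 h)
  obtain ⟨ψ, p1, p2, p3, p4, p5, hroot⟩ := exists_psi h2 hmodd hζ
  have D : Dat m ζ ψ (antidiagJ k (2 * n)) u :=
    ⟨antidiagJ_transpose k _, antidiagJ_sq k _, huO, hordm, h2, hmodd, p1, p2, p3, p4, p5⟩
  subst hr
  obtain ⟨E, F⟩ := exists_fam D hc (Module.finrank k c) le_rfl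
  have hspan : Submodule.span k (Set.range (bb ψ (antidiagJ k (2 * n)) E)) = c := by
    apply Submodule.eq_of_le_of_finrank_eq
    · rw [Submodule.span_le]
      rintro _ ⟨j, rfl⟩
      exact bb_mem (mul_ne_zero h2 hmk) D F hc j
    · rw [finrank_span_eq_card (bb_li D F), Fintype.card_fin]
  refine ⟨bb ψ (antidiagJ k (2 * n)) E, bb_li D F, hspan, ?_, ?_⟩
  · rintro ⟨-, x, hxJ, hxd, hxu, hxc⟩
    exact main_a D F hspan hroot hxJ hxd hxu hxc
  · intro hcon
    apply main_b D F hspan hroot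
    intro x hxJ hxu hxc hxd
    by_cases hnr : n > m * Module.finrank k c
    · exact hcon ⟨hnr, x, hxJ, hxd, hxu, hxc⟩
    · have := no_x D F (by rw [Fintype.card_fin, mul_assoc]; omega) hxJ
        (fun j => hxc _ (bb_mem (mul_ne_zero h2 hmk) D F hc j))
      rw [hxd] at this
      apply h2
      linear_combination -this
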